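/- For every integer n with 0 ≤ n ≤ N−1 and every sample point s = a + x with x ∈ {2, 3, …, N−1}, provided (s−1)·(σ(s−1) + (2s−1)·τ(s−1)) ≠ 0, the weighted Racah polynomials satisfy the three-term recurrence in the variable s: R̂_n(s) = A1·√(ρ(s)(2s+1)/(ρ(s−1)(2s−1)))·R̂_n(s−1) − B1·√(ρ(s)(2s+1)/(ρ(s−2)(2s−3)))·R̂_n(s−2), where A1 = (2s−1)·[σ(s−1) + (s−1)·τ(s−1) − 2·λ_n·s(s−1)] / [(s−1)·(σ(s−1) + (2s−1)·τ(s−1))] and B1 = s·σ(s−1) / [(s−1)·(σ(s−1) + (2s−1)·τ(s−1))]. -/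

import Mathlib

open Finset

/-- Rising Pochhammer symbol `(x)_k = x (x+1) ⋯ (x+k-1)` for a real `x`. -/
noncomputable def pochR (x : ℝ) (k : ℕ) : ℝ := ∏ i ∈ Finset.range k, (x + i)

/-- The `n`-th Racah polynomial in Zhu's normalization. -/
noncomputable def racahR (a b α β : ℝ) (n : ℕ) (s : ℝ) : ℝ :=
  (1 / (Nat.factorial n : ℝ)) * pochR (a + b + α + 1) n * pochR (β + 1) n *
    pochR (a - b + 1) n *
    ∑ k ∈ Finset.range (n + 1),
      pochR (-(n : ℝ)) k * pochR (a - s) k * pochR (a + s + 1) k *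
          pochR (α + β + (n : ℝ) + 1) k /
        (pochR (β + 1) k * pochR (a + b + α + 1) k * pochR (a - b + 1) k *
          (Nat.factorial k : ℝ))

/-- The Racah weight function `ρ(s)`. -/
noncomputable def racahW (a b α β : ℝ) (s : ℝ) : ℝ :=
  Real.Gamma (a + s + 1) * Real.Gamma (b + s + α + 1) * Real.Gamma (b + α - s) *
      Real.Gamma (s - a + β + 1) /
    (Real.Gamma (b + s + 1) * Real.Gamma (b - s) * Real.Gamma (s - a + 1) *
      Real.Gamma (a - β + s + 1))

/-- The squared norm `d_n²`. -/
noncomputable def racahD2 (a b α β : ℝ) (n : ℕ) : ℝ :=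
  Real.Gamma (α + n + 1) * Real.Gamma (β + n + 1) * Real.Gamma (a + b + α + n + 1) *
      Real.Gamma (b - a + α + β + n + 1) /
    ((α + β + 2 * n + 1) * Real.Gamma (n + 1) * Real.Gamma (b - a - n) *
      Real.Gamma (α + β + n + 1) * Real.Gamma (a + b - n - β))

/-- The weighted Racah polynomial `R̂_n(s) = R_n(s) √(ρ(s)(2s+1)/d_n²)`. -/
noncomputable def racahHat (a b α β : ℝ) (n : ℕ) (s : ℝ) : ℝ :=
  racahR a b α β n s * Real.sqrt (racahW a b α β s * (2 * s + 1) / racahD2 a b α β n)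

/-- `σ(s) = (s−a)(s+b)(s+a−β)(b+α−s)`. -/
noncomputable def racahSigma (a b α β : ℝ) (s : ℝ) : ℝ :=
  (s - a) * (s + b) * (s + a - β) * (b + α - s)

/-- `τ(s)`. -/
noncomputable def racahTau (a b α β : ℝ) (s : ℝ) : ℝ :=
  a * (α + 1) * (a - β) + b * (b + α) * (β + 1) - (α + 1) * (β + 1) -
    s * (s + 1) * (α + β + 2)

/-- `λ_n = n (n+α+β+1)`. -/
noncomputable def racahLam (α β : ℝ) (n : ℕ) : ℝ := (n : ℝ) * ((n : ℝ) + α + β + 1)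

/-!
The second-order difference operator attached to `σ` and `τ` on the lattice `s (s + 1)` sends
`φ k s = (a - s)_k (a + s + 1)_k` to `-λ_k φ k` plus a multiple of `φ (k - 1)`. The hypergeometric
coefficients of `R_n` satisfy exactly the two-term recurrence that makes all terms but the top one
telescope, and the top one carries the factor `λ_n - λ_n`; so `R_n` is an eigenfunction. The
eigenvalue equation at `s - 1` relates the values of `R_n` at `s`, `s - 1` and `s - 2`, and
multiplying by `√(ρ(s) (2s + 1) / d_n²)` turns it into the recurrence for the weighted polynomials.

The symmetry `s ↦ -s - 1` of the lattice fixes each `φ k` and interchanges `σ(s)` with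
`σ(s) + (2s + 1) τ(s)`. The latter is therefore a product of four explicit linear factors.
-/

section Pochhammer

lemma pochR_zero (x : ℝ) : pochR x 0 = 1 := prod_range_zero _

lemma pochR_succ (x : ℝ) (k : ℕ) : pochR x (k + 1) = pochR x k * (x + k) :=
  prod_range_succ _ _

lemma pochR_succ' (x : ℝ) (k : ℕ) : pochR x (k + 1) = x * pochR (x + 1) k := by
  simp only [pochR, prod_range_succ', Nat.cast_add, Nat.cast_one, Nat.cast_zero, add_zero,
    mul_comm x, add_assoc, add_comm (1 : ℝ)]

end Pochhammer

/-- The basis `φ k s = (a - s)_k (a + s + 1)_k` of the polynomials in `s (s + 1)`, in which Racah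
polynomials have hypergeometric coefficients. -/
noncomputable def racahBasis (a : ℝ) (k : ℕ) (s : ℝ) : ℝ :=
  pochR (a - s) k * pochR (a + s + 1) k

section Basis

variable (a : ℝ) (k : ℕ) (s : ℝ)

lemma racahBasis_zero : racahBasis a 0 s = 1 := by
  simp only [racahBasis, pochR_zero, mul_one]

lemma racahBasis_succ :
    racahBasis a (k + 1) s = (a - s + k) * (a + s + 1 + k) * racahBasis a k s := by
  simp only [racahBasis, pochR_succ]
  ring

lemma racahBasis_reflect : racahBasis a k (-s - 1) = racahBasis a k s := by
  rw [racahBasis, racahBasis, show a - (-s - 1) = a + s + 1 by ring,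
    show a + (-s - 1) + 1 = a - s by ring, mul_comm]

lemma racahBasis_succ_add_one :
    (a + s + 1) * racahBasis a (k + 1) (s + 1) =
      (a - s - 1) * (a + s + 1 + k) * (a + s + 2 + k) * racahBasis a k s := by
  have hleft : pochR (a - (s + 1)) (k + 1) = (a - s - 1) * pochR (a - s) k := by
    rw [pochR_succ', ← sub_sub, sub_add_cancel]
  have hright : (a + s + 1) * pochR (a + (s + 1) + 1) (k + 1) =
      pochR (a + s + 1) k * (a + s + 1 + k) * (a + s + 2 + k) := by
    rw [← add_assoc, ← pochR_succ', pochR_succ, pochR_succ]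
    push_cast
    ring
  rw [racahBasis, racahBasis, hleft]
  linear_combination (a - s - 1) * pochR (a - s) k * hright

lemma racahBasis_succ_sub_one :
    (a - s) * racahBasis a (k + 1) (s - 1) =
      (a + s) * (a - s + k) * (a - s + 1 + k) * racahBasis a k s := by
  have h := racahBasis_succ_add_one a k (-s - 1)
  rw [racahBasis_reflect, ← racahBasis_reflect a (k + 1),
    show -(-s - 1 + 1) - 1 = s - 1 by ring] at h
  linear_combination h

end Basis

lemma racahSigma_reflect (a b α β s : ℝ) :
    racahSigma a b α β (-s - 1) =
      racahSigma a b α β s + (2 * s + 1) * racahTau a b α β s := by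
  unfold racahSigma racahTau
  ring

/-- The difference operator `σ(s) Δ/Δx(s - 1/2) ∇/∇x(s) + τ(s) Δ/Δx(s)` of hypergeometric type on
the lattice `x(s) = s (s + 1)`. It is multiplied by `2 s (s + 1) (2 s + 1)` so that its definition
involves no division. -/
noncomputable def racahOp (a b α β : ℝ) : (ℝ → ℝ) →ₗ[ℝ] (ℝ → ℝ) where
  toFun f s :=
    s * (racahSigma a b α β s + (2 * s + 1) * racahTau a b α β s) * (f (s + 1) - f s) -
      (s + 1) * racahSigma a b α β s * (f s - f (s - 1))
  map_add' f g := by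
    ext s
    simp only [Pi.add_apply]
    ring
  map_smul' c f := by
    ext s
    simp only [Pi.smul_apply, smul_eq_mul, RingHom.id_apply]
    ring

/-- The coefficient of `racahBasis a k` in the hypergeometric sum defining `racahR a b α β n`. -/
noncomputable def racahCoeff (a b α β : ℝ) (n k : ℕ) : ℝ :=
  pochR (-(n : ℝ)) k * pochR (α + β + n + 1) k /
    (pochR (β + 1) k * pochR (a + b + α + 1) k * pochR (a - b + 1) k * (Nat.factorial k : ℝ))

section DifferenceEquation

variable (a b α β : ℝ)

lemma racahOp_apply (f : ℝ → ℝ) (s : ℝ) :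
    racahOp a b α β f s =
      s * (racahSigma a b α β s + (2 * s + 1) * racahTau a b α β s) * (f (s + 1) - f s) -
        (s + 1) * racahSigma a b α β s * (f s - f (s - 1)) :=
  rfl

lemma racahOp_racahBasis_zero : racahOp a b α β (racahBasis a 0) = 0 := by
  ext s
  simp only [racahOp_apply, racahBasis_zero, sub_self, mul_zero, Pi.zero_apply]

lemma racahOp_racahBasis_succ (k : ℕ) (s : ℝ) :
    racahOp a b α β (racahBasis a (k + 1)) s =
      2 * s * (s + 1) * (2 * s + 1) *
        ((k + 1) * (β + 1 + k) * (a + b + α + 1 + k) * (a - b + 1 + k) * racahBasis a k s -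
          racahLam α β (k + 1) * racahBasis a (k + 1) s) := by
  rw [racahOp_apply, ← racahSigma_reflect, racahBasis_succ a k s]
  unfold racahSigma racahLam
  push_cast
  linear_combination
    s * (b - s - 1) * (s + 1 + β - a) * (b + α + s + 1) * racahBasis_succ_add_one a k s -
      (s + 1) * (s + b) * (s + a - β) * (b + α - s) * racahBasis_succ_sub_one a k s

lemma racahR_eq_smul_sum (n : ℕ) :
    racahR a b α β n =
      (1 / (Nat.factorial n : ℝ) * pochR (a + b + α + 1) n * pochR (β + 1) n *
        pochR (a - b + 1) n) •
        ∑ k ∈ range (n + 1), racahCoeff a b α β n k • racahBasis a k := by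
  ext s
  simp only [racahR, racahCoeff, racahBasis, Pi.smul_apply, Finset.sum_apply, smul_eq_mul]
  congr 1
  exact sum_congr rfl fun k _ => by ring

variable {a b α β}

lemma racahCoeff_succ {n k : ℕ} (hβ : β + 1 + k ≠ 0) (habα : a + b + α + 1 + k ≠ 0)
    (hab : a - b + 1 + k ≠ 0) :
    racahCoeff a b α β n (k + 1) *
        ((k + 1) * (β + 1 + k) * (a + b + α + 1 + k) * (a - b + 1 + k)) =
      (racahLam α β k - racahLam α β n) * racahCoeff a b α β n k := by
  have hratio : racahCoeff a b α β n (k + 1) =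
      racahCoeff a b α β n k * ((-n + k) * (α + β + n + 1 + k) /
        ((k + 1) * (β + 1 + k) * (a + b + α + 1 + k) * (a - b + 1 + k))) := by
    rw [racahCoeff, racahCoeff, div_mul_div_comm]
    simp only [pochR_succ, Nat.factorial_succ, Nat.cast_mul, Nat.cast_add, Nat.cast_one]
    congr 1 <;> ring
  rw [hratio, mul_assoc, div_mul_cancel₀ _ (by positivity)]
  unfold racahLam
  ring

lemma racahOp_partial_sum {n m : ℕ} (hβ : ∀ k < m, β + 1 + k ≠ 0)
    (habα : ∀ k < m, a + b + α + 1 + k ≠ 0) (hab : ∀ k < m, a - b + 1 + k ≠ 0) (s : ℝ) :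
    racahOp a b α β (∑ k ∈ range (m + 1), racahCoeff a b α β n k • racahBasis a k) s +
        2 * s * (s + 1) * (2 * s + 1) * racahLam α β n *
          (∑ k ∈ range (m + 1), racahCoeff a b α β n k • racahBasis a k) s =
      2 * s * (s + 1) * (2 * s + 1) *
        ((racahLam α β n - racahLam α β m) * (racahCoeff a b α β n m * racahBasis a m s)) := by
  induction m with
  | zero =>
    simp only [zero_add, sum_range_one, map_smul, racahOp_racahBasis_zero, Pi.zero_apply,
      Pi.smul_apply, smul_eq_mul, racahLam, Nat.cast_zero, zero_mul, sub_zero]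
    ring
  | succ m ih =>
    have hsum := ih (fun k hk => hβ k (hk.trans m.lt_succ_self))
      (fun k hk => habα k (hk.trans m.lt_succ_self)) (fun k hk => hab k (hk.trans m.lt_succ_self))
    have hcoeff := racahCoeff_succ (n := n) (hβ m m.lt_succ_self) (habα m m.lt_succ_self)
      (hab m m.lt_succ_self)
    rw [sum_range_succ _ (m + 1), map_add, map_smul]
    simp only [Pi.add_apply, Pi.smul_apply, smul_eq_mul]
    linear_combination hsum +
      racahCoeff a b α β n (m + 1) * racahOp_racahBasis_succ a b α β m s +
      2 * s * (s + 1) * (2 * s + 1) * racahBasis a m s * hcoeff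

theorem racahOp_racahR {n : ℕ} (hβ : ∀ k < n, β + 1 + k ≠ 0)
    (habα : ∀ k < n, a + b + α + 1 + k ≠ 0) (hab : ∀ k < n, a - b + 1 + k ≠ 0) (s : ℝ) :
    racahOp a b α β (racahR a b α β n) s =
      -(2 * s * (s + 1) * (2 * s + 1) * racahLam α β n * racahR a b α β n s) := by
  have htop := racahOp_partial_sum (n := n) hβ habα hab s
  rw [sub_self, zero_mul, mul_zero] at htop
  rw [racahR_eq_smul_sum, map_smul, Pi.smul_apply, Pi.smul_apply, eq_neg_of_add_eq_zero_left htop,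
    smul_eq_mul, smul_eq_mul]
  ring

theorem racahR_three_term {n : ℕ} (hβ : ∀ k < n, β + 1 + k ≠ 0)
    (habα : ∀ k < n, a + b + α + 1 + k ≠ 0) (hab : ∀ k < n, a - b + 1 + k ≠ 0) (s : ℝ) :
    (s - 1) * (racahSigma a b α β (s - 1) + (2 * s - 1) * racahTau a b α β (s - 1)) *
        racahR a b α β n s =
      (2 * s - 1) *
          (racahSigma a b α β (s - 1) + (s - 1) * racahTau a b α β (s - 1) -
            2 * racahLam α β n * s * (s - 1)) * racahR a b α β n (s - 1) -
        s * racahSigma a b α β (s - 1) * racahR a b α β n (s - 2) := by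
  have h := racahOp_racahR hβ habα hab (s - 1)
  rw [racahOp_apply, sub_add_cancel, show s - 1 - 1 = s - 2 by ring] at h
  linear_combination h

end DifferenceEquation

section Weight

variable {a b α β s t : ℝ}

lemma racahW_pos (ha : -(1 / 2) < a) (hα : -1 < α) (hβ1 : -1 < β) (hβ2 : β < 2 * a + 1)
    (has : a ≤ s) (hsb : s + 1 ≤ b) : 0 < racahW a b α β s := by
  unfold racahW
  have := Real.Gamma_pos_of_pos (show 0 < a + s + 1 by linarith)
  have := Real.Gamma_pos_of_pos (show 0 < b + s + α + 1 by linarith)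
  have := Real.Gamma_pos_of_pos (show 0 < b + α - s by linarith)
  have := Real.Gamma_pos_of_pos (show 0 < s - a + β + 1 by linarith)
  have := Real.Gamma_pos_of_pos (show 0 < b + s + 1 by linarith)
  have := Real.Gamma_pos_of_pos (show 0 < b - s by linarith)
  have := Real.Gamma_pos_of_pos (show 0 < s - a + 1 by linarith)
  have := Real.Gamma_pos_of_pos (show 0 < a - β + s + 1 by linarith)
  positivity

lemma racahW_mul_pos (ha : -(1 / 2) < a) (hα : -1 < α) (hβ1 : -1 < β) (hβ2 : β < 2 * a + 1)
    (has : a ≤ s) (hsb : s + 1 ≤ b) : 0 < racahW a b α β s * (2 * s + 1) :=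
  mul_pos (racahW_pos ha hα hβ1 hβ2 has hsb) (by linarith)

lemma racahSigma_add_racahTau_pos (ha : -(1 / 2) < a) (hα : -1 < α) (hβ : -1 < β)
    (has : a ≤ s) (hsb : s + 1 < b) :
    0 < racahSigma a b α β s + (2 * s + 1) * racahTau a b α β s := by
  have hfactor : racahSigma a b α β s + (2 * s + 1) * racahTau a b α β s =
      (s + a + 1) * (b - s - 1) * (s - a + β + 1) * (b + α + s + 1) := by
    rw [← racahSigma_reflect, racahSigma]
    ring
  rw [hfactor]
  exact mul_pos (mul_pos (mul_pos (by linarith) (by linarith)) (by linarith)) (by linarith)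

lemma sqrt_mul_racahHat (n : ℕ) (hs : 0 ≤ racahW a b α β s * (2 * s + 1))
    (ht : 0 < racahW a b α β t * (2 * t + 1)) :
    √(racahW a b α β s * (2 * s + 1) / (racahW a b α β t * (2 * t + 1))) *
        racahHat a b α β n t =
      √(racahW a b α β s * (2 * s + 1) / racahD2 a b α β n) * racahR a b α β n t := by
  rw [racahHat, mul_left_comm, ← Real.sqrt_mul (div_nonneg hs ht.le),
    div_mul_div_cancel₀ ht.ne', mul_comm]

end Weight

theorem racah_three_term_recurrence_variable_general {a b α β s : ℝ} {n : ℕ}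
    (ha : -(1 / 2) < a) (hα : -1 < α) (hβ1 : -1 < β) (hβ2 : β < 2 * a + 1)
    (hn : (n : ℝ) + 1 ≤ b - a) (has : a + 2 ≤ s) (hsb : s + 1 ≤ b) :
    racahHat a b α β n s =
      ((2 * s - 1) *
            (racahSigma a b α β (s - 1) + (s - 1) * racahTau a b α β (s - 1) -
              2 * racahLam α β n * s * (s - 1)) /
          ((s - 1) *
            (racahSigma a b α β (s - 1) + (2 * s - 1) * racahTau a b α β (s - 1)))) *
        √(racahW a b α β s * (2 * s + 1) / (racahW a b α β (s - 1) * (2 * s - 1))) *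
        racahHat a b α β n (s - 1) -
      (s * racahSigma a b α β (s - 1) /
          ((s - 1) *
            (racahSigma a b α β (s - 1) + (2 * s - 1) * racahTau a b α β (s - 1)))) *
        √(racahW a b α β s * (2 * s + 1) / (racahW a b α β (s - 2) * (2 * s - 3))) *
        racahHat a b α β n (s - 2) := by
  have hR := racahR_three_term (a := a) (b := b) (α := α) (β := β) (n := n)
    (fun k _ => by linarith [k.cast_nonneg (α := ℝ)])
    (fun k _ => by linarith [k.cast_nonneg (α := ℝ)])
    (fun k hk => by linarith [(Nat.cast_lt (α := ℝ)).2 hk]) s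
  have hpos := racahSigma_add_racahTau_pos ha hα hβ1 (show a ≤ s - 1 by linarith)
    (show s - 1 + 1 < b by linarith)
  have h₀ := racahW_mul_pos ha hα hβ1 hβ2 (show a ≤ s by linarith) hsb
  have h₁ := sqrt_mul_racahHat n h₀.le
    (racahW_mul_pos ha hα hβ1 hβ2 (show a ≤ s - 1 by linarith) (by linarith))
  have h₂ := sqrt_mul_racahHat n h₀.le
    (racahW_mul_pos ha hα hβ1 hβ2 (show a ≤ s - 2 by linarith) (by linarith))
  rw [show 2 * (s - 1) + 1 = 2 * s - 1 by ring] at hpos h₁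
  rw [show 2 * (s - 2) + 1 = 2 * s - 3 by ring] at h₂
  have hden := (mul_pos (show 0 < s - 1 by linarith) hpos).ne'
  rw [mul_assoc _ √_ _, mul_assoc _ √_ _, h₁, h₂, div_mul_eq_mul_div, div_mul_eq_mul_div,
    ← sub_div, eq_div_iff hden, racahHat]
  linear_combination √(racahW a b α β s * (2 * s + 1) / racahD2 a b α β n) * hR

theorem racah_three_term_recurrence_variable
    (N : ℕ) (hN : 2 ≤ N) (a α β b : ℝ) (ha : -(1/2) < a) (hα : -1 < α)
    (hβ1 : -1 < β) (hβ2 : β < 2 * a + 1) (hb : b = a + N)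
    (n : ℕ) (hn : n ≤ N - 1) (x : ℕ) (hx2 : 2 ≤ x) (hx : x ≤ N - 1)
    (hden : (a + x - 1) *
        (racahSigma a b α β (a + x - 1) +
          (2 * (a + x) - 1) * racahTau a b α β (a + x - 1)) ≠ 0) :
    racahHat a b α β n (a + x) =
      ((2 * (a + x) - 1) *
            (racahSigma a b α β (a + x - 1) +
              (a + x - 1) * racahTau a b α β (a + x - 1) -
              2 * racahLam α β n * (a + x) * (a + x - 1)) /
          ((a + x - 1) *
            (racahSigma a b α β (a + x - 1) +
              (2 * (a + x) - 1) * racahTau a b α β (a + x - 1)))) *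
        Real.sqrt (racahW a b α β (a + x) * (2 * (a + x) + 1) /
          (racahW a b α β (a + x - 1) * (2 * (a + x) - 1))) *
        racahHat a b α β n (a + x - 1) -
      ((a + x) * racahSigma a b α β (a + x - 1) /
          ((a + x - 1) *
            (racahSigma a b α β (a + x - 1) +
              (2 * (a + x) - 1) * racahTau a b α β (a + x - 1)))) *
        Real.sqrt (racahW a b α β (a + x) * (2 * (a + x) + 1) /
          (racahW a b α β (a + x - 2) * (2 * (a + x) - 3))) *
        racahHat a b α β n (a + x - 2) := by
  have hnN : (n : ℝ) + 1 ≤ N := by exact_mod_cast (by omega : n + 1 ≤ N)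
  have hxN : (x : ℝ) + 1 ≤ N := by exact_mod_cast (by omega : x + 1 ≤ N)
  have hx2' : (2 : ℝ) ≤ x := by exact_mod_cast hx2
  exact racah_three_term_recurrence_variable_general ha hα hβ1 hβ2 (by linarith) (by linarith)
    (by linarith)
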